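/- Under Assumption (C), let u = (u¹,…,u^d) be a probabilistic solution (for some initial data) such that t ↦ u(t,·) is continuous in L¹_loc(ℝ)^d. Then for every γ ∈ {1,…,d} and all τ, t ≥ 0: (i) for every a ∈ ℝ, u^γ(τ,a) ≤ u^γ(τ+t, a + λ̄^γ t); (ii) for every b ∈ ℝ, u^γ(τ,b⁻) ≥ u^γ(τ+t, (b + λ̲^γ t)⁻). -/

import Mathlib

open MeasureTheory Filter Set

noncomputable section

/-- A cumulative distribution function on ℝ: nondecreasing, right-continuous,
tending to `0` at `-∞` and to `1` at `+∞`. -/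
def IsCDF (F : ℝ → ℝ) : Prop :=
  Monotone F ∧ (∀ x : ℝ, ContinuousWithinAt F (Ici x) x) ∧
    Tendsto F atBot (nhds 0) ∧ Tendsto F atTop (nhds 1)

/-- The pseudo-inverse `F⁻¹(v) = inf {x | v ≤ F x}` of a CDF. -/
def cdfInv (F : ℝ → ℝ) (v : ℝ) : ℝ := sInf {x : ℝ | v ≤ F x}

/-- The velocity function `λ^γ{u}(t,x)` obtained by averaging the `γ`-th coordinate
between the left limit `u^γ(t,x⁻)` and the value `u^γ(t,x)`. -/
def lamBrace {d : ℕ} (lam : Fin d → (Fin d → ℝ) → ℝ)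
    (u : Fin d → ℝ → ℝ → ℝ) (γ : Fin d) (t x : ℝ) : ℝ :=
  ∫ θ in (0:ℝ)..1,
    lam γ (Function.update (fun γ' => u γ' t x) γ
      ((1 - θ) * Function.leftLim (u γ t) x + θ * u γ t x))

/-- A test function `φ` of class `C^{1,0}_c`: continuous, compactly supported,
with continuous time derivative `φt`. -/
def IsTestFun (φ φt : ℝ → ℝ → ℝ) : Prop :=
  Continuous (fun p : ℝ × ℝ => φ p.1 p.2) ∧
    HasCompactSupport (fun p : ℝ × ℝ => φ p.1 p.2) ∧
    Continuous (fun p : ℝ × ℝ => φt p.1 p.2) ∧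
    ∀ t x : ℝ, HasDerivAt (fun s => φ s x) (φt t x) t

/-- A probabilistic solution to the diagonal hyperbolic system
`∂_t u^γ + λ^γ(u) ∂_x u^γ = 0` with initial data `u0`. -/
def IsProbSol {d : ℕ} (lam : Fin d → (Fin d → ℝ) → ℝ)
    (u : Fin d → ℝ → ℝ → ℝ) (u0 : Fin d → ℝ → ℝ) : Prop :=
  (∀ γ : Fin d, Measurable fun p : Ici (0:ℝ) × ℝ => u γ (p.1 : ℝ) p.2) ∧
  (∀ (γ : Fin d) (t : ℝ), 0 ≤ t → IsCDF (u γ t)) ∧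
  (∀ γ : Fin d, IsCDF (u0 γ)) ∧
  ∃ μ : Fin d → ℝ → Measure ℝ,
    (∀ (γ : Fin d) (t : ℝ), IsProbabilityMeasure (μ γ t)) ∧
    (∀ (γ : Fin d) (t : ℝ), 0 ≤ t → ∀ x : ℝ, (μ γ t (Iic x)).toReal = u γ t x) ∧
    ∀ φ φt : Fin d → ℝ → ℝ → ℝ, (∀ γ, IsTestFun (φ γ) (φt γ)) →
      (∑ γ : Fin d, ((∫ t in Ici (0:ℝ), ∫ x : ℝ, φt γ t x * u γ t x) +
          ∫ x : ℝ, φ γ 0 x * u0 γ x))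
        = ∑ γ : Fin d,
            ∫ t in Ici (0:ℝ), ∫ x : ℝ, φ γ t x * lamBrace lam u γ t x ∂(μ γ t)

/-- Continuity of `t ↦ u(t,·)` in `L¹_loc(ℝ)^d` on `[0,∞)`. -/
def ContL1loc {d : ℕ} (u : Fin d → ℝ → ℝ → ℝ) : Prop :=
  ∀ (γ : Fin d) (a b t₀ : ℝ), 0 ≤ t₀ →
    Tendsto (fun t => ∫ x in Icc a b, |u γ t x - u γ t₀ x|)
      (nhdsWithin t₀ (Ici 0)) (nhds 0)

open Function ProbabilityTheory
open scoped Topology ContDiff Convolution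

/-!
Fix `γ` and a speed `c`, and test the equation against travelling bumps `g(t) ψ(x - ct)` with
`ψ ≥ 0`. Writing `H(t) = ∫ ψ(x - ct) u^γ(t, x) dx` and integrating `ψ'` by parts against the CDF,
one gets `∫ g' H dt = ∫ g ∫ ψ(x - ct) (λ^γ{u} - c) dμ^γ_t dt`. Since `H` is continuous, it is
nondecreasing when `c` bounds `λ^γ` from above and nonincreasing when `c` bounds it from below. This
compares local averages of the profiles `y ↦ u^γ(t, y + ct)` at two times. Both profiles are
monotone, so the first at `α` and the second at any `β > α` are ordered in the same way; right
continuity gives (i) and passing to left limits gives (ii).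
-/

section RealAnalysis

lemma monotoneOn_normed_convolution_Ioi {H : ℝ → ℝ} (hH : Continuous H) {a : ℝ}
    (h : ∀ g : ℝ → ℝ, ContDiff ℝ ∞ g → HasCompactSupport g → tsupport g ⊆ Ioi a →
      (∀ t, 0 ≤ g t) → ∫ t, deriv g t * H t ≤ 0) (ρ : ContDiffBump (0 : ℝ)) :
    MonotoneOn (ρ.normed volume ⋆[ContinuousLinearMap.lsmul ℝ ℝ] H) (Ioi (a + ρ.rOut)) := by
  have hderiv (x : ℝ) :=
    (ρ.hasCompactSupport_normed (μ := volume)).hasDerivAt_convolution_left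
      (ContinuousLinearMap.lsmul ℝ ℝ) ρ.contDiff_normed (hH.locallyIntegrable (μ := volume)) x
  refine monotoneOn_of_deriv_nonneg (convex_Ioi _)
    (fun x _ => (hderiv x).continuousAt.continuousWithinAt)
    (fun x _ => (hderiv x).differentiableAt.differentiableWithinAt) fun x hx => ?_
  rw [interior_Ioi, mem_Ioi] at hx
  have hreflect : (fun t => ρ.normed volume (x - t)) =
      ρ.normed volume ∘ Homeomorph.subLeft x := rfl
  have hsupp : tsupport (fun t => ρ.normed volume (x - t)) ⊆ Ioi a := by
    rw [hreflect, tsupport_comp_eq_preimage, ρ.tsupport_normed_eq]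
    intro t ht
    have hxt : |x - t| ≤ ρ.rOut := by simpa using ht
    rw [mem_Ioi]
    linarith [le_of_abs_le hxt]
  have hneg := h (fun t => ρ.normed volume (x - t)) (ρ.contDiff_normed.comp (by fun_prop))
    (ρ.hasCompactSupport_normed.comp_homeomorph (Homeomorph.subLeft x)) hsupp
    fun t => ρ.nonneg_normed _
  rw [(hderiv x).deriv, convolution_eq_swap]
  simpa [deriv_comp_const_sub, integral_neg] using hneg

lemma monotoneOn_Ici_of_integral_deriv_mul_nonpos {H : ℝ → ℝ} (hH : Continuous H) {a : ℝ}
    (h : ∀ g : ℝ → ℝ, ContDiff ℝ ∞ g → HasCompactSupport g → tsupport g ⊆ Ioi a →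
      (∀ t, 0 ≤ g t) → ∫ t, deriv g t * H t ≤ 0) :
    MonotoneOn H (Ici a) := by
  rw [← Ioi_insert]
  refine MonotoneOn.insert_of_continuousWithinAt ?_ ?_ hH.continuousWithinAt
  · intro s hs t _ hst
    let ρ : ℕ → ContDiffBump (0 : ℝ) := fun n =>
      ⟨1 / (n + 1 : ℝ) / 2, 1 / (n + 1 : ℝ), by positivity, half_lt_self (by positivity)⟩
    have hρ : Tendsto (fun n => (ρ n).rOut) atTop (𝓝 0) :=
      tendsto_one_div_add_atTop_nhds_zero_nat
    have hlim := ContDiffBump.convolution_tendsto_right_of_continuous (μ := volume) hρ hH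
    refine le_of_tendsto_of_tendsto (hlim s) (hlim t) ?_
    filter_upwards [hρ.eventually (gt_mem_nhds (sub_pos.2 hs))] with n hn
    exact monotoneOn_normed_convolution_Ioi hH h (ρ n) (mem_Ioi.2 (by linarith))
      (mem_Ioi.2 (by linarith)) hst
  · exact mem_closure_iff_clusterPt.1 (by simp [closure_Ioi])

lemma le_of_forall_integral_mul_le {F G : ℝ → ℝ} (hF : Monotone F) (hG : Monotone G)
    (h : ∀ ψ : ℝ → ℝ, ContDiff ℝ ∞ ψ → HasCompactSupport ψ → (∀ y, 0 ≤ ψ y) →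
      ∫ y, ψ y * F y ≤ ∫ y, ψ y * G y) {α β : ℝ} (hαβ : α < β) :
    F α ≤ G β := by
  let ψ : ContDiffBump ((α + β) / 2) :=
    ⟨(β - α) / 4, (β - α) / 2, by linarith, by linarith⟩
  have hsupp : support ψ = Ioo α β := by
    rw [ψ.support_eq, Real.ball_eq_Ioo]
    congr 1 <;> ring
  have hint {K : ℝ → ℝ} (hK : Monotone K) : Integrable fun y => ψ y * K y :=
    hK.locallyIntegrable.integrable_smul_left_of_hasCompactSupport ψ.continuous
      ψ.hasCompactSupport
  have hmono {K₁ K₂ : ℝ → ℝ} (h₁ : Monotone K₁) (h₂ : Monotone K₂)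
      (hle : ∀ y ∈ Ioo α β, K₁ y ≤ K₂ y) : ∫ y, ψ y * K₁ y ≤ ∫ y, ψ y * K₂ y := by
    refine integral_mono (hint h₁) (hint h₂) fun y => ?_
    by_cases hy : y ∈ Ioo α β
    · exact mul_le_mul_of_nonneg_left (hle y hy) ψ.nonneg
    · simp [notMem_support.1 (hsupp ▸ hy)]
  refine le_of_mul_le_mul_left ?_ (ψ.integral_pos (μ := volume))
  calc (∫ y, ψ y) * F α = ∫ y, ψ y * F α := (integral_mul_const _ _).symm
    _ ≤ ∫ y, ψ y * F y := hmono monotone_const hF fun y hy => hF hy.1.le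
    _ ≤ ∫ y, ψ y * G y := h ψ ψ.contDiff ψ.hasCompactSupport fun y => ψ.nonneg
    _ ≤ ∫ y, ψ y * G β := hmono hG monotone_const fun y hy => hG hy.2.le
    _ = (∫ y, ψ y) * G β := integral_mul_const _ _

lemma tendsto_integral_translate_mul_zero {w : ℝ → ℝ → ℝ} (hw : ∀ t, LocallyIntegrable (w t))
    {t₀ : ℝ} (hlim : ∀ a b : ℝ, Tendsto (fun t => ∫ x in Icc a b, |w t x|) (𝓝 t₀) (𝓝 0))
    {ψ : ℝ → ℝ} (hψ : Continuous ψ) (hψc : HasCompactSupport ψ) (c : ℝ) :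
    Tendsto (fun t => ∫ x, ψ (x - c * t) * w t x) (𝓝 t₀) (𝓝 0) := by
  obtain ⟨M, hM⟩ := hψc.exists_bound_of_continuous hψ
  obtain ⟨R, hR⟩ := hψc.isCompact.isBounded.subset_closedBall 0
  have hbound := (hlim (c * t₀ - (R + 1)) (c * t₀ + (R + 1))).const_mul M
  rw [mul_zero] at hbound
  refine squeeze_zero_norm' ?_ hbound
  have hnear : ∀ᶠ t in 𝓝 t₀, |c * t - c * t₀| < 1 :=
    (continuous_const_mul c).tendsto t₀ (Metric.ball_mem_nhds _ one_pos)
  filter_upwards [hnear] with t ht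
  have hout : ∀ x ∉ Icc (c * t₀ - (R + 1)) (c * t₀ + (R + 1)), ψ (x - c * t) * w t x = 0 := by
    refine fun x hx => mul_eq_zero_of_left (image_eq_zero_of_notMem_tsupport fun hmem => hx ?_) _
    have hxt : |x - c * t| ≤ R := by simpa using hR hmem
    rw [abs_lt] at ht
    rw [abs_le] at hxt
    constructor <;> linarith
  rw [← setIntegral_eq_integral_of_forall_compl_eq_zero hout, ← integral_const_mul]
  refine norm_integral_le_of_norm_le
    (((hw t).integrableOn_isCompact isCompact_Icc).abs.const_mul M) (.of_forall fun x => ?_)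
  rw [norm_mul]
  exact mul_le_mul_of_nonneg_right (hM _) (norm_nonneg _)

lemma continuousAt_integral_translate_mul {v : ℝ → ℝ → ℝ} (hv : ∀ t, LocallyIntegrable (v t))
    {t₀ : ℝ} (hlim : ∀ a b : ℝ,
      Tendsto (fun t => ∫ x in Icc a b, |v t x - v t₀ x|) (𝓝 t₀) (𝓝 0))
    {ψ : ℝ → ℝ} (hψ : Continuous ψ) (hψc : HasCompactSupport ψ) (c : ℝ) :
    ContinuousAt (fun t => ∫ x, ψ (x - c * t) * v t x) t₀ := by
  have hint (s t : ℝ) : Integrable fun x => ψ (x - c * s) * v t x :=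
    (hv t).integrable_smul_left_of_hasCompactSupport (by fun_prop)
      (hψc.comp_homeomorph (Homeomorph.subRight (c * s)))
  have hfixed : Tendsto (fun t => ∫ x, ψ (x - c * t) * v t₀ x) (𝓝 t₀)
      (𝓝 (∫ x, ψ (x - c * t₀) * v t₀ x)) := by
    have := ((hψc.comp_homeomorph (Homeomorph.neg ℝ)).continuous_convolution_right
      (ContinuousLinearMap.mul ℝ ℝ) (hv t₀) (hψ.comp continuous_neg)).comp
      (continuous_const_mul c)
    simpa [convolution_def, comp_def, mul_comm] using this.tendsto t₀
  have herror := tendsto_integral_translate_mul_zero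
    (fun t => (hv t).sub (hv t₀)) hlim hψ hψc c
  have hsplit (t : ℝ) : (∫ x, ψ (x - c * t) * (v t - v t₀) x) + ∫ x, ψ (x - c * t) * v t₀ x =
      ∫ x, ψ (x - c * t) * v t x := by
    simp_rw [Pi.sub_apply, mul_sub]
    rw [integral_sub (hint t t) (hint t t₀), sub_add_cancel]
  simpa only [ContinuousAt, hsplit, zero_add] using herror.add hfixed

lemma integral_deriv_mul_measureReal_Iic (μ : Measure ℝ) [IsFiniteMeasure μ] {f : ℝ → ℝ}
    (hf : ContDiff ℝ 1 f) (hc : HasCompactSupport f) :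
    ∫ x, deriv f x * μ.real (Iic x) = -∫ x, f x ∂μ := by
  let k : ℝ → ℝ → ℝ := fun x y => {p : ℝ × ℝ | p.2 ≤ p.1}.indicator (fun p => deriv f p.1) (x, y)
  have hk : Integrable (uncurry k) (volume.prod μ) :=
    (((hf.continuous_deriv le_rfl).integrable_of_hasCompactSupport hc.deriv).comp_fst μ).indicator
      (measurableSet_le measurable_snd measurable_fst)
  have hleft (x : ℝ) : ∫ y, k x y ∂μ = deriv f x * μ.real (Iic x) := by
    have : k x = (Iic x).indicator fun _ => deriv f x := by ext y; simp [k, indicator]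
    rw [this, integral_indicator_const _ measurableSet_Iic, smul_eq_mul, mul_comm]
  have hright (y : ℝ) : ∫ x, k x y = -f y := by
    have : (fun x => k x y) = (Ici y).indicator (deriv f) := by ext x; simp [k, indicator]
    rw [this, integral_indicator measurableSet_Ici, integral_Ici_eq_integral_Ioi,
      hc.integral_Ioi_deriv_eq hf]
  calc ∫ x, deriv f x * μ.real (Iic x) = ∫ x, ∫ y, k x y ∂μ := by simp_rw [hleft]
    _ = ∫ y, (∫ x, k x y) ∂μ := integral_integral_swap hk
    _ = -∫ y, f y ∂μ := by simp_rw [hright, integral_neg]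

end RealAnalysis

section ScalarTransport

/-- The law `κ t` moves with velocity `L t x`: its CDF `v(t, ·)` is continuous in time in `L¹_loc`
and is a weak solution of the scalar equation `∂_t v + L ∂_x v = 0` on `[0, ∞)`. The weak form
involves nonnegative times only, whereas the regularity is required on the whole time axis. Test
functions vanish at time `0`, so that no initial data enters. -/
structure IsTransportSolution (κ : Kernel ℝ ℝ) (L : ℝ → ℝ → ℝ) : Prop where
  measurable_velocity : Measurable (uncurry L)
  exists_velocity_bound : ∃ M, ∀ t x, |L t x| ≤ M
  tendsto_integral_cdf_sub : ∀ a b t₀ : ℝ,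
    Tendsto (fun t => ∫ x in Icc a b, |cdf (κ t) x - cdf (κ t₀) x|) (𝓝 t₀) (𝓝 0)
  weak_eq : ∀ φ φt : ℝ → ℝ → ℝ, IsTestFun φ φt → (∀ x, φ 0 x = 0) →
    ∫ t in Ici (0 : ℝ), ∫ x, φt t x * cdf (κ t) x =
      ∫ t in Ici (0 : ℝ), ∫ x, φ t x * L t x ∂κ t

/-- The average of the CDF of `κ t` against the profile `ψ` moving at speed `c`. -/
def movingAverage (κ : Kernel ℝ ℝ) (ψ : ℝ → ℝ) (c t : ℝ) : ℝ :=
  ∫ x, ψ (x - c * t) * cdf (κ t) x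

variable {κ : Kernel ℝ ℝ} {L : ℝ → ℝ → ℝ} {ψ g : ℝ → ℝ}

lemma movingAverage_eq_integral_mul_translate (κ : Kernel ℝ ℝ) (ψ : ℝ → ℝ) (c t : ℝ) :
    movingAverage κ ψ c t = ∫ y, ψ y * cdf (κ t) (y + c * t) := by
  rw [movingAverage, ← integral_add_right_eq_self _ (c * t)]
  simp

lemma isTestFun_travelling (hg : ContDiff ℝ 1 g) (hgc : HasCompactSupport g)
    (hψ : ContDiff ℝ 1 ψ) (hψc : HasCompactSupport ψ) (c : ℝ) :
    IsTestFun (fun t x => g t * ψ (x - c * t))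
      (fun t x => deriv g t * ψ (x - c * t) - c * g t * deriv ψ (x - c * t)) := by
  refine ⟨by fun_prop, ?_, by fun_prop, fun t x => ?_⟩
  · refine HasCompactSupport.intro (K := (fun p : ℝ × ℝ => (p.1, p.2 + c * p.1)) ''
      (tsupport g ×ˢ tsupport ψ)) ((hgc.isCompact.prod hψc.isCompact).image (by fun_prop)) ?_
    rintro ⟨t, x⟩ hp
    by_contra hne
    obtain ⟨hgt, hψx⟩ := mul_ne_zero_iff.1 hne
    exact hp ⟨(t, x - c * t), ⟨subset_tsupport g hgt, subset_tsupport ψ hψx⟩, by simp⟩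
  · have hshift : HasDerivAt (fun s => x - c * s) (-c) t := by
      simpa using ((hasDerivAt_id t).const_mul c).const_sub x
    exact ((hg.differentiable one_ne_zero t).hasDerivAt.mul
      ((hψ.differentiable one_ne_zero (x - c * t)).hasDerivAt.comp t hshift)).congr_deriv
      (by simp only [comp_apply]; ring)

lemma integrable_mul_integral_kernel [IsMarkovKernel κ] (hg : Integrable g) {f : ℝ → ℝ → ℝ}
    (hf : Measurable (uncurry f)) {M : ℝ} (hM : ∀ t x, |f t x| ≤ M) :
    Integrable fun t => g t * ∫ x, f t x ∂κ t := by
  refine hg.mul_bdd (c := M)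
    (StronglyMeasurable.integral_kernel_prod_right hf.stronglyMeasurable).aestronglyMeasurable
    (.of_forall fun t => ?_)
  simpa using norm_integral_le_of_norm_le_const (μ := κ t) (f := f t) (.of_forall (hM t))

lemma movingAverage_deriv [IsMarkovKernel κ] (hψ : ContDiff ℝ 1 ψ) (hψc : HasCompactSupport ψ)
    (c t : ℝ) : movingAverage κ (deriv ψ) c t = -∫ x, ψ (x - c * t) ∂κ t := by
  rw [← integral_deriv_mul_measureReal_Iic (κ t) (f := fun x => ψ (x - c * t)) (by fun_prop)
    (hψc.comp_homeomorph (Homeomorph.subRight (c * t)))]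
  simp_rw [movingAverage, deriv_comp_sub_const, cdf_eq_real]

lemma integrable_translate_mul_cdf (hψ : Continuous ψ) (hψc : HasCompactSupport ψ)
    (μ : Measure ℝ) (k : ℝ) : Integrable fun x => ψ (x - k) * cdf μ x :=
  (monotone_cdf μ).locallyIntegrable.integrable_smul_left_of_hasCompactSupport (by fun_prop)
    (hψc.comp_homeomorph (Homeomorph.subRight k))

lemma cdf_le_cdf_of_forall_movingAverage_le {c s t : ℝ}
    (h : ∀ ψ : ℝ → ℝ, ContDiff ℝ 1 ψ → HasCompactSupport ψ → (∀ y, 0 ≤ ψ y) →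
      movingAverage κ ψ c s ≤ movingAverage κ ψ c t) {α β : ℝ} (hαβ : α < β) :
    cdf (κ s) (α + c * s) ≤ cdf (κ t) (β + c * t) := by
  have hmono (r : ℝ) : Monotone fun y => cdf (κ r) (y + c * r) :=
    (monotone_cdf (κ r)).comp (monotone_id.add_const _)
  refine le_of_forall_integral_mul_le (hmono s) (hmono t) (fun ψ hψ hψc hψ0 => ?_) hαβ
  simp_rw [← movingAverage_eq_integral_mul_translate]
  exact h ψ (hψ.of_le (mod_cast le_top)) hψc hψ0

namespace IsTransportSolution

lemma continuous_movingAverage (h : IsTransportSolution κ L) (hψ : Continuous ψ)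
    (hψc : HasCompactSupport ψ) (c : ℝ) : Continuous (movingAverage κ ψ c) :=
  continuous_iff_continuousAt.2 fun t₀ =>
    continuousAt_integral_translate_mul (v := fun t => cdf (κ t))
      (fun t => (monotone_cdf (κ t)).locallyIntegrable)
      (fun a b => h.tendsto_integral_cdf_sub a b t₀) hψ hψc c

lemma integral_movingAverage_eq (h : IsTransportSolution κ L) (hg : ContDiff ℝ 1 g)
    (hgc : HasCompactSupport g) (hg0 : g 0 = 0) (hψ : ContDiff ℝ 1 ψ)
    (hψc : HasCompactSupport ψ) (c : ℝ) :
    ∫ t in Ici (0 : ℝ), (deriv g t * movingAverage κ ψ c t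
        - c * g t * movingAverage κ (deriv ψ) c t) =
      ∫ t in Ici (0 : ℝ), g t * ∫ x, ψ (x - c * t) * L t x ∂κ t := by
  have hweak := h.weak_eq _ _ (isTestFun_travelling hg hgc hψ hψc c) (by simp [hg0])
  have hint := fun t => integrable_translate_mul_cdf hψ.continuous hψc (κ t) (c * t)
  have hint' := fun t =>
    integrable_translate_mul_cdf (hψ.continuous_deriv le_rfl) hψc.deriv (κ t) (c * t)
  simp_rw [mul_assoc, integral_const_mul] at hweak
  rw [← hweak]
  congr 1 with t
  simp_rw [movingAverage, mul_assoc, ← integral_const_mul]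
  rw [← integral_sub ((hint t).const_mul _) (((hint' t).const_mul _).const_mul _)]
  simp_rw [sub_mul, mul_assoc]

variable [IsMarkovKernel κ]

lemma integral_deriv_mul_movingAverage (h : IsTransportSolution κ L) (hg : ContDiff ℝ 1 g)
    (hgc : HasCompactSupport g) (hg0 : g 0 = 0) (hψ : ContDiff ℝ 1 ψ)
    (hψc : HasCompactSupport ψ) (c : ℝ) :
    ∫ t in Ici (0 : ℝ), deriv g t * movingAverage κ ψ c t =
      ∫ t in Ici (0 : ℝ), g t * ∫ x, ψ (x - c * t) * (L t x - c) ∂κ t := by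
  obtain ⟨M, hM⟩ := h.exists_velocity_bound
  obtain ⟨K, hK⟩ := hψc.exists_bound_of_continuous hψ.continuous
  have hL := h.measurable_velocity
  have hψcont := hψ.continuous
  have hgi : Integrable g := hg.continuous.integrable_of_hasCompactSupport hgc
  have hψi (t : ℝ) : Integrable (fun x => ψ (x - c * t)) (κ t) :=
    .of_bound (by fun_prop) K (.of_forall fun x => hK _)
  have hψLi (t : ℝ) : Integrable (fun x => ψ (x - c * t) * L t x) (κ t) :=
    (hψi t).mul_bdd (c := M) (by fun_prop) (.of_forall (hM t))
  have hgH : Integrable fun t => deriv g t * movingAverage κ ψ c t :=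
    ((hg.continuous_deriv le_rfl).mul
      (h.continuous_movingAverage hψ.continuous hψc c)).integrable_of_hasCompactSupport
      hgc.deriv.mul_right
  have hgψ : Integrable fun t => c * g t * ∫ x, ψ (x - c * t) ∂κ t :=
    integrable_mul_integral_kernel (hgi.const_mul c) (by fun_prop) fun t x => hK _
  have hweak := h.integral_movingAverage_eq hg hgc hg0 hψ hψc c
  simp_rw [movingAverage_deriv hψ hψc, mul_neg, sub_neg_eq_add] at hweak
  rw [integral_add hgH.integrableOn hgψ.integrableOn, ← eq_sub_iff_add_eq] at hweak
  have hgψL : Integrable fun t => g t * ∫ x, ψ (x - c * t) * L t x ∂κ t :=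
    integrable_mul_integral_kernel (M := K * M) hgi (by fun_prop) fun t x => by
      rw [abs_mul]
      exact mul_le_mul (hK _) (hM t x) (abs_nonneg _) ((norm_nonneg _).trans (hK 0))
  rw [hweak, ← integral_sub hgψL.integrableOn hgψ.integrableOn]
  congr 1 with t
  simp_rw [mul_sub]
  rw [integral_sub (hψLi t) ((hψi t).mul_const c), integral_mul_const]
  ring

lemma integral_deriv_mul_movingAverage_eq_of_tsupport_subset (h : IsTransportSolution κ L)
    (hg : ContDiff ℝ 1 g) (hgc : HasCompactSupport g) (hg0 : tsupport g ⊆ Ioi 0)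
    (hψ : ContDiff ℝ 1 ψ) (hψc : HasCompactSupport ψ) (c : ℝ) :
    ∫ t, deriv g t * movingAverage κ ψ c t =
      ∫ t in Ici (0 : ℝ), g t * ∫ x, ψ (x - c * t) * (L t x - c) ∂κ t := by
  have hg_zero {t : ℝ} (ht : t ≤ 0) : t ∉ tsupport g := fun h' => (hg0 h').not_ge ht
  rw [← h.integral_deriv_mul_movingAverage hg hgc (image_eq_zero_of_notMem_tsupport
    (hg_zero le_rfl)) hψ hψc c]
  refine (setIntegral_eq_integral_of_forall_compl_eq_zero fun t ht => ?_).symm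
  rw [notMem_support.1 fun ht' => hg_zero (not_le.1 ht).le (support_deriv_subset ht'), zero_mul]

lemma monotoneOn_movingAverage (h : IsTransportSolution κ L) {c : ℝ} (hc : ∀ t x, L t x ≤ c)
    (hψ : ContDiff ℝ 1 ψ) (hψc : HasCompactSupport ψ) (hψ0 : ∀ y, 0 ≤ ψ y) :
    MonotoneOn (movingAverage κ ψ c) (Ici 0) := by
  refine monotoneOn_Ici_of_integral_deriv_mul_nonpos
    (h.continuous_movingAverage hψ.continuous hψc c) fun g hg hgc hg0 hg_nonneg => ?_
  rw [h.integral_deriv_mul_movingAverage_eq_of_tsupport_subset (hg.of_le (mod_cast le_top)) hgc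
    hg0 hψ hψc c]
  exact integral_nonpos fun t => mul_nonpos_of_nonneg_of_nonpos (hg_nonneg t) <|
    integral_nonpos fun x => mul_nonpos_of_nonneg_of_nonpos (hψ0 _) (sub_nonpos.2 (hc t x))

lemma antitoneOn_movingAverage (h : IsTransportSolution κ L) {c : ℝ} (hc : ∀ t x, c ≤ L t x)
    (hψ : ContDiff ℝ 1 ψ) (hψc : HasCompactSupport ψ) (hψ0 : ∀ y, 0 ≤ ψ y) :
    AntitoneOn (movingAverage κ ψ c) (Ici 0) := by
  suffices MonotoneOn (fun t => -movingAverage κ ψ c t) (Ici 0) from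
    fun s hs t ht hst => neg_le_neg_iff.1 (this hs ht hst)
  refine monotoneOn_Ici_of_integral_deriv_mul_nonpos
    (h.continuous_movingAverage hψ.continuous hψc c).neg fun g hg hgc hg0 hg_nonneg => ?_
  simp only [Pi.neg_apply, mul_neg, integral_neg, neg_nonpos]
  rw [h.integral_deriv_mul_movingAverage_eq_of_tsupport_subset (hg.of_le (mod_cast le_top)) hgc
    hg0 hψ hψc c]
  exact integral_nonneg fun t => mul_nonneg (hg_nonneg t) <|
    integral_nonneg fun x => mul_nonneg (hψ0 _) (sub_nonneg.2 (hc t x))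

lemma cdf_le_cdf_add (h : IsTransportSolution κ L) {c : ℝ} (hc : ∀ t x, L t x ≤ c) {s t : ℝ}
    (hs : 0 ≤ s) (hst : s ≤ t) (a : ℝ) : cdf (κ s) a ≤ cdf (κ t) (a + c * (t - s)) := by
  have hle {α β : ℝ} (hαβ : α < β) : cdf (κ s) (α + c * s) ≤ cdf (κ t) (β + c * t) :=
    cdf_le_cdf_of_forall_movingAverage_le (fun ψ hψ hψc hψ0 =>
      h.monotoneOn_movingAverage hc hψ hψc hψ0 hs (hs.trans hst) hst) hαβ
  have hright := ((cdf (κ t)).right_continuous (a + c * (t - s))).mono_left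
    (nhdsWithin_mono _ Ioi_subset_Ici_self)
  refine ge_of_tendsto hright ?_
  filter_upwards [self_mem_nhdsWithin] with y hy
  simpa using hle (α := a - c * s) (β := y - c * t) (by linarith [mem_Ioi.1 hy])

lemma leftLim_cdf_add_le (h : IsTransportSolution κ L) {c : ℝ} (hc : ∀ t x, c ≤ L t x) {s t : ℝ}
    (hs : 0 ≤ s) (hst : s ≤ t) (b : ℝ) :
    leftLim (cdf (κ t)) (b + c * (t - s)) ≤ leftLim (cdf (κ s)) b := by
  have hle {α β : ℝ} (hαβ : α < β) : cdf (κ t) (α + c * t) ≤ cdf (κ s) (β + c * s) :=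
    cdf_le_cdf_of_forall_movingAverage_le (fun ψ hψ hψc hψ0 =>
      h.antitoneOn_movingAverage hc hψ hψc hψ0 hs (hs.trans hst) hst) hαβ
  refine le_of_tendsto ((monotone_cdf (κ t)).tendsto_leftLim (b + c * (t - s))) ?_
  filter_upwards [self_mem_nhdsWithin] with y hy
  obtain ⟨β, hyβ, hβb⟩ := exists_between (show y - c * (t - s) < b by linarith [mem_Iio.1 hy])
  have := hle (α := y - c * t) (β := β - c * s) (by linarith)
  rw [sub_add_cancel, sub_add_cancel] at this
  exact this.trans ((monotone_cdf (κ s)).le_leftLim hβb)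

end IsTransportSolution
end ScalarTransport

section VelocityField

lemma measurable_uncurry_leftLim {α : Type*} [MeasurableSpace α] {f : α → ℝ → ℝ}
    (hf : Measurable (uncurry f)) (hmono : ∀ a, Monotone (f a)) :
    Measurable (uncurry fun a => leftLim (f a)) := by
  have hseq (x : ℝ) : Tendsto (fun n : ℕ => x - 1 / (n + 1)) atTop (𝓝[<] x) := by
    refine tendsto_nhdsWithin_iff.2 ⟨?_, .of_forall fun n => sub_lt_self x (by positivity)⟩
    simpa using tendsto_one_div_add_atTop_nhds_zero_nat.const_sub x
  refine measurable_of_tendsto_metrizable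
    (f := fun (n : ℕ) (p : α × ℝ) => f p.1 (p.2 - 1 / (n + 1))) (fun n => by fun_prop)
    (tendsto_pi_nhds.2 fun p => ?_)
  exact ((hmono p.1).tendsto_leftLim p.2).comp (hseq p.2)

namespace IsCDF

variable {F : ℝ → ℝ}

lemma mem_Icc (hF : IsCDF F) (x : ℝ) : F x ∈ Icc (0 : ℝ) 1 :=
  ⟨hF.1.le_of_tendsto hF.2.2.1 x, hF.1.ge_of_tendsto hF.2.2.2 x⟩

lemma leftLim_mem_Icc (hF : IsCDF F) (x : ℝ) : leftLim F x ∈ Icc (0 : ℝ) 1 :=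
  isClosed_Icc.mem_of_tendsto (hF.1.tendsto_leftLim x) (.of_forall hF.mem_Icc)

end IsCDF

/-- The segment `θ ↦ (u¹, …, (1 - θ) u^γ(t, x⁻) + θ u^γ(t, x), …, u^d)(t, x)` filling in the jump of
`u^γ(t, ·)` at `x`, along which `lamBrace` averages `λ^γ`. -/
def jumpSegment {d : ℕ} (u : Fin d → ℝ → ℝ → ℝ) (γ : Fin d) (t x θ : ℝ) : Fin d → ℝ :=
  update (fun γ' => u γ' t x) γ ((1 - θ) * leftLim (u γ t) x + θ * u γ t x)

variable {d : ℕ} {lam : Fin d → (Fin d → ℝ) → ℝ} {u : Fin d → ℝ → ℝ → ℝ} {γ : Fin d}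

lemma jumpSegment_mem_Icc {t : ℝ} (hu : ∀ γ', IsCDF (u γ' t)) (x : ℝ) {θ : ℝ}
    (hθ : θ ∈ Icc (0 : ℝ) 1) : jumpSegment u γ t x θ ∈ Icc (0 : Fin d → ℝ) 1 := by
  have hγ : (1 - θ) * leftLim (u γ t) x + θ * u γ t x ∈ Icc (0 : ℝ) 1 :=
    convex_Icc 0 1 ((hu γ).leftLim_mem_Icc x) ((hu γ).mem_Icc x) (sub_nonneg.2 hθ.2) hθ.1
      (sub_add_cancel 1 θ)
  exact ⟨le_update_iff.2 ⟨hγ.1, fun γ' _ => ((hu γ').mem_Icc x).1⟩,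
    update_le_iff.2 ⟨hγ.2, fun γ' _ => ((hu γ').mem_Icc x).2⟩⟩

lemma measurable_jumpSegment (hu : ∀ γ', Measurable (uncurry (u γ')))
    (hmono : ∀ t, Monotone (u γ t)) :
    Measurable fun p : (ℝ × ℝ) × ℝ => jumpSegment u γ p.1.1 p.1.2 p.2 := by
  have hleft := measurable_uncurry_leftLim (hu γ) hmono
  refine measurable_pi_iff.2 fun γ' => ?_
  rcases eq_or_ne γ' γ with rfl | hne
  · simp only [jumpSegment, update_self]
    exact ((measurable_const.sub measurable_snd).mul (hleft.comp measurable_fst)).add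
      (measurable_snd.mul ((hu γ').comp measurable_fst))
  · simp only [jumpSegment, update_of_ne hne]
    exact (hu γ').comp measurable_fst

lemma lamBrace_congr {lam' : Fin d → (Fin d → ℝ) → ℝ}
    (h : EqOn (lam γ) (lam' γ) (Icc 0 1)) {t : ℝ} (hu : ∀ γ', IsCDF (u γ' t)) (x : ℝ) :
    lamBrace lam u γ t x = lamBrace lam' u γ t x := by
  refine intervalIntegral.integral_congr fun θ hθ => h (jumpSegment_mem_Icc hu x ?_)
  rwa [uIcc_of_le zero_le_one] at hθ

lemma measurable_uncurry_lamBrace (hlam : Measurable (lam γ))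
    (hu : ∀ γ', Measurable (uncurry (u γ'))) (hmono : ∀ t, Monotone (u γ t)) :
    Measurable (uncurry (lamBrace lam u γ)) := by
  have hint := (hlam.comp (measurable_jumpSegment hu hmono)).stronglyMeasurable
  simp only [uncurry_def, lamBrace, intervalIntegral.integral_of_le zero_le_one]
  exact hint.integral_prod_right'.measurable

lemma lamBrace_mem_Icc (hlam : Measurable (lam γ)) {c C : ℝ}
    (hmaps : MapsTo (lam γ) (Icc 0 1) (Icc c C)) {t : ℝ} (hu : ∀ γ', IsCDF (u γ' t)) (x : ℝ) :
    lamBrace lam u γ t x ∈ Icc c C := by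
  have hmem : ∀ θ ∈ Icc (0 : ℝ) 1, lam γ (jumpSegment u γ t x θ) ∈ Icc c C := fun θ hθ =>
    hmaps (jumpSegment_mem_Icc hu x hθ)
  have hcont : Continuous (jumpSegment u γ t x) := by unfold jumpSegment; fun_prop
  have hint : IntervalIntegrable (fun θ => lam γ (jumpSegment u γ t x θ)) volume 0 1 :=
    (intervalIntegrable_iff_integrableOn_Icc_of_le zero_le_one).2 <|
      .of_mem_Icc c C (hlam.comp hcont.measurable).aemeasurable
        (ae_restrict_of_forall_mem measurableSet_Icc hmem)
  change ∫ θ in (0 : ℝ)..1, lam γ (jumpSegment u γ t x θ) ∈ Icc c C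
  constructor
  · simpa using intervalIntegral.integral_mono_on zero_le_one intervalIntegrable_const hint
      fun θ hθ => (hmem θ hθ).1
  · simpa using intervalIntegral.integral_mono_on zero_le_one hint intervalIntegrable_const
      fun θ hθ => (hmem θ hθ).2

end VelocityField

section ScalarReduction

lemma measurable_of_measurable_measureReal_Iic {α : Type*} [MeasurableSpace α]
    {ν : α → Measure ℝ} [∀ a, IsProbabilityMeasure (ν a)]
    (h : ∀ x, Measurable fun a => (ν a).real (Iic x)) : Measurable ν := by
  refine .measure_of_isPiSystem_of_isProbabilityMeasure
    (BorelSpace.measurable_eq.trans (borel_eq_generateFrom_Iic ℝ)) isPiSystem_Iic ?_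
  rintro _ ⟨x, rfl⟩
  simpa using (h x).ennreal_ofReal

lemma eq_of_forall_sum_eq {ι T R : Type*} [Fintype ι] [AddCommMonoid R] {P : T → Prop}
    {A B : ι → T → R} {z : T} (hz : P z) (hA : ∀ i, A i z = 0) (hB : ∀ i, B i z = 0)
    (h : ∀ φ : ι → T, (∀ i, P (φ i)) → ∑ i, A i (φ i) = ∑ i, B i (φ i)) (i : ι) {φ : T}
    (hφ : P φ) : A i φ = B i φ := by
  classical
  have hsum {D : ι → T → R} (hD : ∀ j, D j z = 0) :
      ∑ j, D j (update (fun _ => z) i φ j) = D i φ := by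
    rw [Fintype.sum_eq_single i fun j hj => by rw [update_of_ne hj, hD], update_self]
  rw [← hsum hA, ← hsum hB]
  refine h _ fun j => ?_
  rcases eq_or_ne j i with rfl | hj
  · rwa [update_self]
  · rwa [update_of_ne hj]

lemma tendsto_comp_max_zero {α : Type*} {l : Filter α} {f : ℝ → α} {t : ℝ}
    (h : Tendsto f (𝓝[Ici 0] (max 0 t)) l) : Tendsto (fun s => f (max 0 s)) (𝓝 t) l :=
  h.comp <| tendsto_nhdsWithin_iff.2
    ⟨(continuous_const.max continuous_id).tendsto t, .of_forall fun s => le_max_left 0 s⟩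

lemma isTestFun_zero : IsTestFun (fun _ _ => 0) (fun _ _ => 0) :=
  ⟨continuous_const, .zero, continuous_const, fun _ _ => hasDerivAt_const _ _⟩

namespace IsProbSol

variable {d : ℕ} {lam : Fin d → (Fin d → ℝ) → ℝ} {u : Fin d → ℝ → ℝ → ℝ} {u0 : Fin d → ℝ → ℝ}

lemma measurable_uncurry_max_zero (hsol : IsProbSol lam u u0) (γ : Fin d) :
    Measurable (uncurry fun t => u γ (max 0 t)) := by
  have hmax : Measurable fun p : ℝ × ℝ =>
      ((⟨max 0 p.1, mem_Ici.2 (le_max_left 0 p.1)⟩ : Ici (0 : ℝ)), p.2) := by fun_prop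
  exact (hsol.1 γ).comp hmax

lemma exists_measure_weak_eq (hsol : IsProbSol lam u u0) (γ : Fin d) :
    ∃ μ : ℝ → Measure ℝ, (∀ t, IsProbabilityMeasure (μ t)) ∧
      (∀ t, 0 ≤ t → ∀ x, (μ t).real (Iic x) = u γ t x) ∧
      ∀ φ φt : ℝ → ℝ → ℝ, IsTestFun φ φt → (∀ x, φ 0 x = 0) →
        ∫ t in Ici (0 : ℝ), ∫ x, φt t x * u γ t x =
          ∫ t in Ici (0 : ℝ), ∫ x, φ t x * lamBrace lam u γ t x ∂μ t := by
  obtain ⟨-, -, -, μ, hμ, hcdf, hweak⟩ := hsol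
  refine ⟨μ γ, hμ γ, hcdf γ, fun φ φt hφ hφ0 => ?_⟩
  have heq := eq_of_forall_sum_eq (P := fun p : (ℝ → ℝ → ℝ) × (ℝ → ℝ → ℝ) => IsTestFun p.1 p.2)
    (A := fun γ p => (∫ t in Ici (0 : ℝ), ∫ x, p.2 t x * u γ t x) + ∫ x, p.1 0 x * u0 γ x)
    (B := fun γ p => ∫ t in Ici (0 : ℝ), ∫ x, p.1 t x * lamBrace lam u γ t x ∂μ γ t)
    (z := (fun _ _ => 0, fun _ _ => 0)) isTestFun_zero (by simp) (by simp)
    (fun p hp => hweak _ _ hp) γ (φ := (φ, φt)) hφ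
  simpa [hφ0] using heq

lemma exists_kernel_weak_eq (hsol : IsProbSol lam u u0) (γ : Fin d) :
    ∃ κ : Kernel ℝ ℝ, IsMarkovKernel κ ∧ (∀ t, ⇑(cdf (κ t)) = u γ (max 0 t)) ∧
      ∀ φ φt : ℝ → ℝ → ℝ, IsTestFun φ φt → (∀ x, φ 0 x = 0) →
        ∫ t in Ici (0 : ℝ), ∫ x, φt t x * cdf (κ t) x =
          ∫ t in Ici (0 : ℝ), ∫ x, φ t x * lamBrace lam u γ t x ∂κ t := by
  obtain ⟨μ, hμ, hμcdf, hweak⟩ := hsol.exists_measure_weak_eq γ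
  have hcdf (t x : ℝ) : (μ (max 0 t)).real (Iic x) = u γ (max 0 t) x :=
    hμcdf _ (le_max_left 0 t) x
  let κ : Kernel ℝ ℝ := ⟨fun t => μ (max 0 t), measurable_of_measurable_measureReal_Iic fun x => by
    simp_rw [hcdf]; exact (hsol.measurable_uncurry_max_zero γ).of_uncurry_right⟩
  have hκ : IsMarkovKernel κ := ⟨fun t => hμ _⟩
  have hκcdf (t : ℝ) : ⇑(cdf (κ t)) = u γ (max 0 t) :=
    funext fun x => (cdf_eq_real _ x).trans (hcdf t x)
  refine ⟨κ, hκ, hκcdf, fun φ φt hφ hφ0 => ?_⟩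
  calc ∫ t in Ici (0 : ℝ), ∫ x, φt t x * cdf (κ t) x
    _ = ∫ t in Ici (0 : ℝ), ∫ x, φt t x * u γ t x :=
        setIntegral_congr_fun measurableSet_Ici fun t ht => by
          simp only [hκcdf, max_eq_right (mem_Ici.1 ht)]
    _ = ∫ t in Ici (0 : ℝ), ∫ x, φ t x * lamBrace lam u γ t x ∂μ t := hweak φ φt hφ hφ0
    _ = ∫ t in Ici (0 : ℝ), ∫ x, φ t x * lamBrace lam u γ t x ∂κ t :=
        setIntegral_congr_fun measurableSet_Ici fun t ht => by
          simp only [κ, Kernel.coe_mk, max_eq_right (mem_Ici.1 ht)]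

lemma exists_isTransportSolution (hsol : IsProbSol lam u u0) {γ : Fin d} {c C : ℝ}
    (hlam : Measurable fun w : Icc (0 : Fin d → ℝ) 1 => lam γ w)
    (hmaps : MapsTo (lam γ) (Icc 0 1) (Icc c C))
    (hL1 : ∀ a b t₀ : ℝ, 0 ≤ t₀ →
      Tendsto (fun t => ∫ x in Icc a b, |u γ t x - u γ t₀ x|) (𝓝[Ici 0] t₀) (𝓝 0)) :
    ∃ (κ : Kernel ℝ ℝ) (L : ℝ → ℝ → ℝ), IsMarkovKernel κ ∧ IsTransportSolution κ L ∧
      (∀ t x, L t x ∈ Icc c C) ∧ ∀ t, 0 ≤ t → ⇑(cdf (κ t)) = u γ t := by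
  -- Only the values on the cube matter, so `λ^γ` may be taken measurable on the whole space.
  obtain ⟨f, hf, hfext⟩ :=
    (MeasurableEmbedding.subtype_coe measurableSet_Icc).exists_measurable_extend hlam
      fun _ => inferInstance
  have hfeq : EqOn (lam γ) f (Icc 0 1) := fun w hw => (congr_fun hfext ⟨w, hw⟩).symm
  obtain ⟨κ, hκ, hκcdf, hweak⟩ := hsol.exists_kernel_weak_eq γ
  let v : Fin d → ℝ → ℝ → ℝ := fun γ' t => u γ' (max 0 t)
  have hvcdf (t : ℝ) (γ' : Fin d) : IsCDF (v γ' t) := hsol.2.1 γ' _ (le_max_left 0 t)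
  have hL (t x : ℝ) : lamBrace (fun _ => f) v γ t x ∈ Icc c C :=
    lamBrace_mem_Icc hf (hmaps.congr hfeq) (hvcdf t) x
  have hLeq {t : ℝ} (ht : 0 ≤ t) (x : ℝ) :
      lamBrace (fun _ => f) v γ t x = lamBrace lam u γ t x := by
    rw [← lamBrace_congr hfeq (hvcdf t)]
    simp only [lamBrace, v, max_eq_right ht]
  refine ⟨κ, lamBrace (fun _ => f) v γ, hκ, ⟨?_, ⟨max |c| |C|, fun t x => ?_⟩, fun a b t₀ => ?_,
    fun φ φt hφ hφ0 => ?_⟩, hL, fun t ht => by rw [hκcdf, max_eq_right ht]⟩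
  · exact measurable_uncurry_lamBrace hf hsol.measurable_uncurry_max_zero fun t => (hvcdf t γ).1
  · exact abs_le_max_abs_abs (hL t x).1 (hL t x).2
  · simp_rw [hκcdf]
    exact tendsto_comp_max_zero (hL1 a b _ (le_max_left 0 t₀))
  · rw [hweak φ φt hφ hφ0]
    exact setIntegral_congr_fun measurableSet_Ici fun t ht => by simp only [hLeq (mem_Ici.1 ht)]

end IsProbSol
end ScalarReduction

theorem finite_speed_of_propagation_general {d : ℕ} {lam : Fin d → (Fin d → ℝ) → ℝ}
    {u : Fin d → ℝ → ℝ → ℝ} {u0 : Fin d → ℝ → ℝ} (hsol : IsProbSol lam u u0) {γ : Fin d} {c C : ℝ}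
    (hlam : Measurable fun w : Icc (0 : Fin d → ℝ) 1 => lam γ w)
    (hmaps : MapsTo (lam γ) (Icc 0 1) (Icc c C))
    (hL1 : ∀ a b t₀ : ℝ, 0 ≤ t₀ →
      Tendsto (fun t => ∫ x in Icc a b, |u γ t x - u γ t₀ x|) (𝓝[Ici 0] t₀) (𝓝 0))
    {τ t : ℝ} (hτ : 0 ≤ τ) (ht : 0 ≤ t) :
    (∀ a : ℝ, u γ τ a ≤ u γ (τ + t) (a + C * t)) ∧
      ∀ b : ℝ, leftLim (u γ (τ + t)) (b + c * t) ≤ leftLim (u γ τ) b := by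
  obtain ⟨κ, L, _, hκ, hL, hcdf⟩ := hsol.exists_isTransportSolution hlam hmaps hL1
  have hle : τ ≤ τ + t := le_add_of_nonneg_right ht
  rw [← hcdf τ hτ, ← hcdf (τ + t) (hτ.trans hle)]
  refine ⟨fun a => ?_, fun b => ?_⟩
  · simpa using hκ.cdf_le_cdf_add (fun t x => (hL t x).2) hτ hle a
  · simpa using hκ.leftLim_cdf_add_le (fun t x => (hL t x).1) hτ hle b

/-- **Finite speed of propagation**: for a probabilistic solution continuous in
`L¹_loc`, one has `u^γ(τ,a) ≤ u^γ(τ+t, a + λ̄^γ t)` and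
`u^γ(τ,b⁻) ≥ u^γ(τ+t, (b + λ̲^γ t)⁻)` for all `τ, t ≥ 0`. -/
theorem finite_speed_of_propagation {d : ℕ} (hd : 1 ≤ d)
    (lam : Fin d → (Fin d → ℝ) → ℝ)
    (hlam : ∀ γ : Fin d, ContinuousOn (lam γ) (Icc (0 : Fin d → ℝ) 1))
    (u : Fin d → ℝ → ℝ → ℝ) (u0 : Fin d → ℝ → ℝ)
    (hsol : IsProbSol lam u u0) (hL1 : ContL1loc u)
    (γ : Fin d) (τ t : ℝ) (hτ : 0 ≤ τ) (ht : 0 ≤ t) :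
    (∀ a : ℝ, u γ τ a ≤ u γ (τ + t) (a + sSup (lam γ '' Icc (0 : Fin d → ℝ) 1) * t)) ∧
    (∀ b : ℝ, Function.leftLim (u γ (τ + t)) (b + sInf (lam γ '' Icc (0 : Fin d → ℝ) 1) * t)
        ≤ Function.leftLim (u γ τ) b) := by
  have hcpt := isCompact_Icc.image_of_continuousOn (hlam γ)
  exact finite_speed_of_propagation_general hsol
    (continuousOn_iff_continuous_domRestrict.1 (hlam γ)).measurable
    (fun w hw => ⟨csInf_le hcpt.bddBelow (mem_image_of_mem _ hw),
      le_csSup hcpt.bddAbove (mem_image_of_mem _ hw)⟩) (hL1 γ) hτ ht
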